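/- Let a, b, c be positive integers such that gcd(c, a / gcd(a,b)) is a power of 2 and gcd(c, b / gcd(a,b)) is a power of 2. Then the equation a·x + b·y = c·z² is 2-Ramsey. -/

import Mathlib

/-- Of two colours, the one avoided by `r` determines `r`. -/
theorem Fin.eq_of_ne_of_ne_two {p q r : Fin 2} (hpq : q ≠ p) (hr : r ≠ p) : r = q := by
  omega

/-- The colourings `A`, `B`, `γ` admit no solution of `u + y = z ^ 2` with `z ≥ N` and
`A u = B y = γ z`; moreover they are all dilates of one colouring, as expressed by
`left_eq` and `right_eq`. -/
structure AvoidsSquareSums (a b e N : ℕ) (A B γ : ℕ → Fin 2) : Prop where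
  a_pos : 0 < a
  b_pos : 0 < b
  e_pos : 0 < e
  left_eq : ∀ u, A u = γ (e * u)
  right_eq : ∀ v, B (b * v) = A (a * v)
  avoids : ∀ z u y, N ≤ z → 0 < u → 0 < y → u + y = z ^ 2 → A u = γ z → B y ≠ γ z

namespace AvoidsSquareSums

variable {a b e N : ℕ} {A B γ : ℕ → Fin 2}

/-- Reflecting first in `z ^ 2` and then in `w ^ 2` preserves the colour class of `z`. -/
theorem shift (h : AvoidsSquareSums a b e N A B γ) {z w u v : ℕ} (hz : N ≤ z) (hw : N ≤ w)
    (hzw : γ w ≠ γ z) (hu : 0 < u) (huz : u < z ^ 2) (hv : 0 < v)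
    (huv : v + z ^ 2 = u + w ^ 2) (hA : A u = γ z) : A v = γ z := by
  have hB : B (z ^ 2 - u) = γ w := Fin.eq_of_ne_of_ne_two hzw <|
    h.avoids z u (z ^ 2 - u) hz hu (by omega) (by omega) hA
  by_contra hne
  exact h.avoids w v (z ^ 2 - u) hw hv (by omega) (by omega)
    (Fin.eq_of_ne_of_ne_two hzw hne) hB

/-- Each colour is taken by `A` arbitrarily far out. -/
theorem exists_left_eq (h : AvoidsSquareSums a b e N A B γ) (p : Fin 2) (n : ℕ) :
    ∃ u, n < u ∧ A u = p := by
  by_contra! hne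
  obtain ⟨q, hq⟩ : ∃ q : Fin 2, q ≠ p := ⟨p + 1, by omega⟩
  have hA : ∀ u, n < u → A u = q := fun u hu => Fin.eq_of_ne_of_ne_two hq (hne u hu)
  set k := N + n + 1 + b * (n + 1) with hk
  have ha := h.a_pos
  have he := h.e_pos
  have hkz : k ≤ e * k := Nat.le_mul_of_pos_left k he
  have hz : γ (e * k) = q := by rw [← h.left_eq]; exact hA _ (by omega)
  have hsq : e * k ≤ (e * k) ^ 2 := Nat.le_self_pow two_ne_zero _
  refine h.avoids (e * k) ((e * k) ^ 2 - b * (n + 1)) (b * (n + 1)) (by omega) (by omega)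
    (Nat.mul_pos h.b_pos (by omega)) (by omega) ?_ ?_
  · rw [hz]; exact hA _ (by omega)
  · rw [hz, h.right_eq]
    exact hA _ (lt_of_lt_of_le (Nat.lt_succ_self n) (Nat.le_mul_of_pos_left _ ha))

/-- Each colour is taken by `γ` arbitrarily far out. -/
theorem exists_square_eq (h : AvoidsSquareSums a b e N A B γ) (p : Fin 2) (n : ℕ) :
    ∃ z, n < z ∧ γ z = p := by
  obtain ⟨u, hu, hA⟩ := h.exists_left_eq p n
  exact ⟨e * u, hu.trans_le (Nat.le_mul_of_pos_left u h.e_pos), by rw [← h.left_eq, hA]⟩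

end AvoidsSquareSums

/-- A colouring that leaves the colour `p` between `m` and `m + k` does so in one step. -/
theorem exists_last_before_change (γ : ℕ → Fin 2) (p : Fin 2) (m k : ℕ) (hm : γ m = p)
    (hk : γ (m + k) ≠ p) : ∃ z, m ≤ z ∧ z < m + k ∧ γ z = p ∧ γ (z + 1) ≠ p := by
  induction k with
  | zero => exact absurd hm hk
  | succ k ih =>
    by_cases hp : γ (m + k) = p
    · exact ⟨m + k, by omega, by omega, hp, hk⟩
    · obtain ⟨z, h₁, h₂, h₃⟩ := ih hp
      exact ⟨z, h₁, by omega, h₃⟩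

/-- A set closed under adding `s` below the bound `T` contains arithmetic progressions up to `T`. -/
theorem add_mul_mem_of_closed {S : Set ℕ} {s T : ℕ}
    (hS : ∀ u ∈ S, u + s ≤ T → u + s ∈ S) (n : ℕ) {u : ℕ} (hu : u ∈ S)
    (hT : u + n * s ≤ T) : u + n * s ∈ S := by
  induction n with
  | zero => simpa using hu
  | succ n ih =>
    rw [Nat.succ_mul, ← Nat.add_assoc] at hT ⊢
    exact hS _ (ih (by omega)) hT

/-- Large integers are nonnegative combinations of `(z + k) ^ 2 - z ^ 2` for `k = 1, 2, g + 1`. -/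
theorem exists_square_difference_combination {g z n : ℕ} (hg : 0 < g)
    (hn : (2 * z + 1) * (g * (g + 1) + (4 * z + 2) / g + 4) ≤ n) :
    ∃ i j l : ℕ, n = i * (2 * z + 1) + j * (4 * z + 4) + l * (2 * (g + 1) * z + (g + 1) ^ 2) := by
  obtain ⟨K, r, hnK, hr, hK⟩ : ∃ K r, n = K * (2 * z + 1) + 2 * r ∧ r < 2 * z + 1 ∧
      g * (g + 1) + (4 * z + 2) / g + 2 ≤ K := by
    have hdiv : g * (g + 1) + (4 * z + 2) / g + 4 ≤ n / (2 * z + 1) := by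
      rw [Nat.le_div_iff_mul_le (by omega), mul_comm]
      exact hn
    have hmod := Nat.div_add_mod' n (2 * z + 1)
    have hlt := Nat.mod_lt n (show 2 * z + 1 > 0 by omega)
    rcases Nat.even_or_odd' (n % (2 * z + 1)) with ⟨r, hr | hr⟩
    · exact ⟨n / (2 * z + 1), r, by omega, by omega, by omega⟩
    · obtain ⟨K, hK⟩ : ∃ K, n / (2 * z + 1) = K + 1 :=
        Nat.exists_eq_add_of_le' ((Nat.succ_pos _).trans_le hdiv)
      refine ⟨K, r + z + 1, ?_, by omega, by omega⟩
      rw [hK, Nat.succ_mul] at hmod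
      omega
  obtain ⟨m, hm⟩ : ∃ m, g * (g + 1) = 2 * m :=
    (Nat.even_mul_succ_self g).two_dvd
  have hm0 : 0 < m := by nlinarith
  have hrm := Nat.div_add_mod r m
  have hlt := Nat.mod_lt r hm0
  set l := r / m
  set j := r % m
  have hl : (g + 1) * l ≤ (4 * z + 2) / g := by
    rw [Nat.le_div_iff_mul_le hg]
    calc (g + 1) * l * g = 2 * (m * l) := by rw [← mul_assoc, ← hm]; ring
      _ ≤ 4 * z + 2 := by omega
  obtain ⟨i, hi⟩ := Nat.exists_eq_add_of_le (show 2 * j + (g + 1) * l ≤ K by omega)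
  refine ⟨i, j, l, ?_⟩
  rw [hnK, hi, ← hrm]
  linear_combination l * hm.symm

/-- Every `n ≥ 4ab` lies between `2abv` and `4abv` for some positive `v`. -/
theorem exists_multiple_between {a b n : ℕ} (ha : 0 < a) (hb : 0 < b) (hn : 4 * a * b ≤ n) :
    ∃ v, 0 < v ∧ 2 * (a * b * v) ≤ n ∧ n ≤ 4 * (a * b * v) := by
  have hab : 0 < a * b := Nat.mul_pos ha hb
  rw [mul_assoc] at hn
  have hle := Nat.mul_div_le n (2 * (a * b))
  have hlt := Nat.lt_mul_div_succ n (show 0 < 2 * (a * b) by omega)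
  rw [Nat.mul_succ, mul_assoc] at hlt
  rw [mul_assoc] at hle
  refine ⟨n / (2 * (a * b)), Nat.div_pos (by omega) (by omega), hle, by omega⟩

namespace AvoidsSquareSums

variable {a b e N : ℕ} {A B γ : ℕ → Fin 2}

/-- Far enough out, every value of `γ` recurs within a bounded time. -/
theorem exists_recurrence (h : AvoidsSquareSums a b e N A B γ) :
    ∃ G n, ∀ z, n ≤ z → ∃ k, k ≤ G ∧ γ (z + 1 + k) = γ z := by
  obtain ⟨u₀, hu₀, hA₀⟩ := h.exists_left_eq 0 0
  obtain ⟨u₁, hu₁, hA₁⟩ := h.exists_left_eq 1 0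
  have ha := h.a_pos
  have hb := h.b_pos
  set U := u₀ + u₁
  have hU : ∀ p : Fin 2, ∃ u, 0 < u ∧ u ≤ U ∧ A u = p := by
    intro p
    rcases (show p = 0 ∨ p = 1 by omega) with rfl | rfl
    exacts [⟨u₀, hu₀, by omega, hA₀⟩, ⟨u₁, hu₁, by omega, hA₁⟩]
  set g := 288 * b with hg
  set C := g * (g + 1) + 4 with hC
  refine ⟨g, N + 16 * b * (C + U) + 4 * a * b, fun z hz => ?_⟩
  by_contra! hne
  have hNz : N ≤ z := by nlinarith
  have hzC : 16 * b * (C + U) ≤ z := by nlinarith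
  have hzab : 4 * a * b ≤ z := by nlinarith
  have hz0 : 0 < z := lt_of_lt_of_le (by positivity) hzab
  obtain ⟨u, hu, huU, hAu⟩ := hU (γ z)
  have hclosed : ∀ k, k ≤ g → ∀ v ∈ {v | 0 < v ∧ A v = γ z},
      v + (2 * (k + 1) * z + (k + 1) ^ 2) ≤ z ^ 2 →
      v + (2 * (k + 1) * z + (k + 1) ^ 2) ∈ {v | 0 < v ∧ A v = γ z} := by
    rintro k hk v ⟨hv, hAv⟩ hle
    have hsq : 0 < (k + 1) ^ 2 := by positivity
    exact ⟨by omega, h.shift hNz (by omega) (hne k hk) hv (by omega) (by omega) (by ring) hAv⟩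
  have hbound : 4 * b * ((2 * z + 1) * (g * (g + 1) + (4 * z + 2) / g + 4) + U) ≤ z ^ 2 := by
    have hdiv : 48 * b * ((4 * z + 2) / g) ≤ z := by
      have := Nat.mul_div_le (4 * z + 2) g
      rw [hg] at this
      rw [hg]
      nlinarith
    have hC' : g * (g + 1) + (4 * z + 2) / g + 4 = C + (4 * z + 2) / g := by omega
    rw [hC']
    set D := (4 * z + 2) / g
    have h₁ : (2 * z + 1) * (C + D) + U ≤ 3 * z * (C + U) + 3 * z * D := by nlinarith
    have h₂ : z * (16 * b * (C + U)) ≤ z * z := Nat.mul_le_mul_left z hzC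
    have h₃ : z * (48 * b * D) ≤ z * z := Nat.mul_le_mul_left z hdiv
    have h₄ := Nat.mul_le_mul_left (4 * b) h₁
    nlinarith
  have hfill : ∀ n, z ^ 2 ≤ 4 * b * n → n ≤ z ^ 2 → A n = γ z := by
    intro n hn hnz
    have hle : (2 * z + 1) * (g * (g + 1) + (4 * z + 2) / g + 4) + U ≤ n :=
      Nat.le_of_mul_le_mul_left (hbound.trans hn) (by positivity)
    obtain ⟨i, j, l, hijl⟩ := exists_square_difference_combination (g := g) (z := z) (n := n - u)
      (by omega) (by omega)
    have hi := add_mul_mem_of_closed (hclosed 0 (by omega)) i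
      (show u ∈ {v | 0 < v ∧ A v = γ z} from ⟨hu, hAu⟩) (by norm_num; omega)
    have hj := add_mul_mem_of_closed (hclosed 1 (by omega)) j hi (by norm_num; omega)
    have hl := add_mul_mem_of_closed (hclosed g le_rfl) l hj (by norm_num; omega)
    norm_num at hl
    rw [show n = u + i * (2 * z + 1) + j * (4 * z + 4) +
      l * (2 * (g + 1) * z + (g + 1) ^ 2) by omega]
    exact hl.2
  have hzsq : z ≤ z ^ 2 := Nat.le_self_pow two_ne_zero z
  obtain ⟨v, hv, hvle, hvlt⟩ := exists_multiple_between ha hb (hzab.trans hzsq)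
  have hbv : 2 * (b * v) ≤ z ^ 2 :=
    le_trans (by nlinarith [Nat.le_mul_of_pos_left (b * v) ha]) hvle
  have hav : a * v ≤ z ^ 2 :=
    le_trans (by nlinarith [Nat.le_mul_of_pos_left (a * v) hb]) hvle
  have hbv0 : 0 < b * v := Nat.mul_pos hb hv
  refine h.avoids z (z ^ 2 - b * v) (b * v) hNz (by omega) hbv0 (by omega)
    (hfill _ ?_ (by omega)) ?_
  · have : z ^ 2 ≤ 4 * (z ^ 2 - b * v) := by omega
    exact this.trans (Nat.mul_le_mul_right _ (by omega))
  · rw [h.right_eq]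
    refine hfill _ (hvlt.trans (le_of_eq (by ring))) hav

/-- The colouring `A` is periodic. -/
theorem exists_period (h : AvoidsSquareSums a b e N A B γ) :
    ∃ P, 0 < P ∧ ∀ u, 0 < u → A (u + P) = A u := by
  obtain ⟨G, n, hG⟩ := h.exists_recurrence
  refine ⟨2 * (G + 1).factorial, by positivity, fun u hu => ?_⟩
  set P := 2 * (G + 1).factorial with hP
  obtain ⟨q, hq⟩ : ∃ q : Fin 2, q ≠ A u := ⟨A u + 1, by omega⟩
  obtain ⟨m, hm, hmq⟩ := h.exists_square_eq q (N + n + u + P + 2 * G + 10)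
  obtain ⟨m', hm', hmp⟩ := h.exists_square_eq (A u) m
  obtain ⟨t, hmt, -, ht, ht'⟩ := exists_last_before_change γ q m (m' - m) hmq
    (by rw [Nat.add_sub_cancel' hm'.le, hmp]; exact hq.symm)
  have htp : γ (t + 1) = A u := Fin.eq_of_ne_of_ne_two hq.symm ht'
  obtain ⟨k, hk, hkq⟩ := hG t (by omega)
  obtain ⟨s, hs, hs', hsp, hsq⟩ := exists_last_before_change γ (A u) (t + 1) k htp
    (by rw [hkq, ht]; exact hq)
  obtain ⟨d, rfl⟩ := Nat.exists_eq_add_of_lt hs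
  have hd : d + 1 ∣ (G + 1).factorial := Nat.dvd_factorial (by omega) (by omega)
  obtain ⟨f, hf⟩ := hd
  have hstep : ∀ v ∈ {v | 0 < v ∧ A v = A u}, v + 2 * (d + 1) ≤ u + P →
      v + 2 * (d + 1) ∈ {v | 0 < v ∧ A v = A u} := by
    rintro v ⟨hv, hAv⟩ hle
    have hup : A (v + (2 * (t + d + 1) + 1)) = A u := by
      rw [← hsp]
      exact h.shift (by omega) (show N ≤ t + d + 1 + 1 by omega) (by rw [hsp]; exact hsq) hv
        (by nlinarith) (by omega) (by ring) (by rw [hsp, hAv])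
    refine ⟨by omega, ?_⟩
    rw [← htp]
    exact h.shift (u := v + (2 * (t + d + 1) + 1)) (by omega) (show N ≤ t by omega)
      (by rw [htp, ht]; exact hq) (by omega) (by nlinarith) (by omega) (by ring)
      (by rw [htp, hup])
  have hPf : P = f * (2 * (d + 1)) := by rw [hP, hf]; ring
  have hmem := add_mul_mem_of_closed hstep f (show u ∈ {v | 0 < v ∧ A v = A u} from ⟨hu, rfl⟩)
    (by rw [hPf])
  rw [← hPf] at hmem
  exact hmem.2

/-- Three dilates of a colouring cannot avoid `u + y = z ^ 2` for all large `z`. -/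
theorem elim (h : AvoidsSquareSums a b e N A B γ) : False := by
  obtain ⟨P, hP, hper⟩ := h.exists_period
  have ha := h.a_pos
  have hb := h.b_pos
  have he := h.e_pos
  have hconst : ∀ k, A (P * (k + 1)) = A P := by
    intro k
    induction k with
    | zero => simp
    | succ k ih => rw [Nat.mul_succ, hper _ (by positivity), ih]
  have hmul : ∀ k, 0 < k → A (P * k) = A P := by
    rintro (_ | k) hk
    exacts [absurd hk (lt_irrefl 0), hconst k]
  set k := N + b + 1
  have hz : γ (e * (P * k)) = A P := by rw [← h.left_eq, hmul k (by omega)]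
  have hlt : b < e * e * P * k * k := by
    have hk : k * k ≤ e * e * P * (k * k) := Nat.le_mul_of_pos_left (k * k) (by positivity)
    rw [← mul_assoc] at hk
    have hkk : k ≤ k * k := Nat.le_mul_self k
    omega
  obtain ⟨m, hm⟩ := Nat.exists_eq_add_of_lt hlt
  have hN : N ≤ e * (P * k) := by
    have := Nat.le_mul_of_pos_left k (Nat.mul_pos he hP)
    rw [mul_assoc] at this
    omega
  refine h.avoids (e * (P * k)) (P * (m + 1)) (b * P) hN (by positivity) (by positivity) ?_ ?_ ?_
  · calc P * (m + 1) + b * P = P * (b + m + 1) := by ring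
      _ = (e * (P * k)) ^ 2 := by rw [← hm]; ring
  · rw [hz, hmul _ (by omega)]
  · rw [hz, h.right_eq, mul_comm, hmul _ ha]

end AvoidsSquareSums

/-- Let `a, b, c` be positive integers such that `gcd(c, a / gcd(a,b))` and
`gcd(c, b / gcd(a,b))` are powers of 2. Then the equation `a·x + b·y = c·z²` is 2-Ramsey. -/
theorem stmt_5 (a b c : ℕ) (ha : 0 < a) (hb : 0 < b) (hc : 0 < c)
    (hac : ∃ ℓ : ℕ, Nat.gcd c (a / Nat.gcd a b) = 2 ^ ℓ)
    (hbc : ∃ ℓ' : ℕ, Nat.gcd c (b / Nat.gcd a b) = 2 ^ ℓ') :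
    ∀ φ : ℕ → Fin 2,
      {w : ℕ × ℕ × ℕ | 0 < w.1 ∧ 0 < w.2.1 ∧ 0 < w.2.2 ∧
        φ w.1 = φ w.2.1 ∧ φ w.1 = φ w.2.2 ∧
        a * w.1 + b * w.2.1 = c * w.2.2 ^ 2}.Infinite := by
  intro φ
  by_contra hfin
  rw [Set.not_infinite] at hfin
  obtain ⟨N, hN⟩ := (hfin.image fun w => w.2.2).bddAbove
  have key : AvoidsSquareSums a b (b * c) (N + 1) (fun u => φ (a * b * (b * c * u)))
      (fun y => φ (a * b * (a * c * y))) (fun z => φ (a * b * z)) :=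
    { a_pos := ha
      b_pos := hb
      e_pos := Nat.mul_pos hb hc
      left_eq := fun u => rfl
      right_eq := fun v => congrArg φ (by ring)
      avoids := by
        intro z u y hz hu hy hsum hA hB
        have hle : a * b * z ≤ N := hN ⟨(a * b * (b * c * u), a * b * (a * c * y), a * b * z),
          ⟨by positivity, by positivity, Nat.mul_pos (Nat.mul_pos ha hb) (by omega),
            hA.trans hB.symm, hA, by linear_combination (a * b) ^ 2 * c * hsum⟩, rfl⟩
        have := Nat.le_mul_of_pos_left z (Nat.mul_pos ha hb)
        omega }
  exact key.elim
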